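/- Let X and Y be finite nonempty types and let D be a probability mass function on X × Y whose marginal on X is uniform and whose marginal on Y is uniform, and suppose D is δ-hypercontractive for some 0 ≤ δ < 1. For every natural number n and all subsets A ⊆ (Fin n → X), B ⊆ (Fin n → Y), setting μ = |A| / |X|^n and ν = |B| / |Y|^n, one has Σ_{(x,y) : x ∈ A, y ∈ B} Π_{i} D(x i, y i) ≤ μν + (4μν)^(1/(2−δ)). (Quantitative Gács–Körner bound for product distributions with uniform marginals.) -/

import Mathlib

open Finset

/-- Marginal distribution on `X` of a distribution on `X × Y`. -/
noncomputable def margX {X Y : Type*} [Fintype Y] (D : X × Y → ℝ) (x : X) : ℝ :=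
  ∑ y, D (x, y)

/-- Marginal distribution on `Y` of a distribution on `X × Y`. -/
noncomputable def margY {X Y : Type*} [Fintype X] (D : X × Y → ℝ) (y : Y) : ℝ :=
  ∑ x, D (x, y)

/-- The conditional-expectation operator `T_D`: `(T_D f)(x) = E[f(y) | x]`. -/
noncomputable def condOp {X Y : Type*} [Fintype Y] (D : X × Y → ℝ) (f : Y → ℝ) (x : X) : ℝ :=
  (∑ y, D (x, y) * f y) / margX D x

/-- The `L_p` norm of `f` with respect to the weight (probability mass) `w`. -/
noncomputable def wnorm {α : Type*} [Fintype α] (w : α → ℝ) (p : ℝ) (f : α → ℝ) : ℝ :=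
  (∑ a, w a * |f a| ^ p) ^ (1 / p)

/-- `D` is `δ`-hypercontractive: `‖T_D f‖_{2 + δ/(1-δ)} ≤ ‖f‖_{2-δ}` for all `f`. -/
def Hypercontractive {X Y : Type*} [Fintype X] [Fintype Y] (D : X × Y → ℝ) (δ : ℝ) : Prop :=
  ∀ f : Y → ℝ,
    wnorm (margX D) (2 + δ / (1 - δ)) (condOp D f) ≤ wnorm (margY D) (2 - δ) f

/-!
By duality, hypercontractivity of `D` gives the two-function inequality
`∑ D(x, y) f(x) g(y) ≤ ‖f‖_p ‖g‖_p` with `p = 2 - δ`, because `2 + δ / (1 - δ)` is the conjugate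
exponent of `p`. This form tensorizes directly: on a product, apply it in one coordinate with the
others fixed, then apply it to the partial norms. For indicator functions of `A` and `B` the
tensorized inequality bounds the mass of `A × B` by `(μν) ^ (1 / p)`.
-/

section WeightedNorm

variable {α β : Type*} [Fintype α] [Fintype β] {w : α → ℝ} {p q : ℝ}

lemma wnorm_nonneg (hw : ∀ a, 0 ≤ w a) (p : ℝ) (f : α → ℝ) : 0 ≤ wnorm w p f :=
  Real.rpow_nonneg (sum_nonneg fun a _ ↦ mul_nonneg (hw a) (by positivity)) _

lemma wnorm_rpow (hw : ∀ a, 0 ≤ w a) (hp : p ≠ 0) (f : α → ℝ) :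
    wnorm w p f ^ p = ∑ a, w a * |f a| ^ p := by
  rw [wnorm, one_div, Real.rpow_inv_rpow _ hp]
  exact sum_nonneg fun a _ ↦ mul_nonneg (hw a) (by positivity)

lemma wnorm_comp_equiv (w : α → ℝ) (p : ℝ) (f : α → ℝ) (e : β ≃ α) :
    wnorm (w ∘ e) p (f ∘ e) = wnorm w p f :=
  congrArg (· ^ (1 / p)) (e.sum_comp fun a ↦ w a * |f a| ^ p)

lemma wnorm_prod {w' : β → ℝ} (hw' : ∀ b, 0 ≤ w' b) (hp : p ≠ 0) (w : α → ℝ) (f : α × β → ℝ) :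
    wnorm (fun z : α × β ↦ w z.1 * w' z.2) p f =
      wnorm w p fun a ↦ wnorm w' p fun b ↦ f (a, b) := by
  rw [wnorm, wnorm]
  simp_rw [abs_of_nonneg (wnorm_nonneg hw' _ _), wnorm_rpow hw' hp, Fintype.sum_prod_type,
    mul_sum, mul_assoc]

lemma wnorm_one_of_unique [Unique α] (hp : p ≠ 0) (f : α → ℝ) :
    wnorm (fun _ ↦ 1) p f = |f default| := by
  rw [wnorm, Fintype.sum_unique, one_mul, one_div, Real.rpow_rpow_inv (abs_nonneg _) hp]

lemma wnorm_indicator_one (hp : p ≠ 0) (w : α → ℝ) (A : Finset α) :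
    wnorm w p (Set.indicator A 1) = (∑ a ∈ A, w a) ^ (1 / p) := by
  classical
  simp [wnorm, Set.indicator_apply, apply_ite abs, ite_pow, Real.zero_rpow hp]

lemma sum_mul_mul_le_wnorm_mul_wnorm (hw : ∀ a, 0 ≤ w a) (hpq : p.HolderConjugate q)
    (f g : α → ℝ) : ∑ a, w a * (f a * g a) ≤ wnorm w p f * wnorm w q g := by
  have weight_split (a : α) : w a ^ p⁻¹ * w a ^ q⁻¹ = w a := by
    rw [← Real.rpow_add' (hw a) (by simp [hpq.inv_add_inv_eq_one]), hpq.inv_add_inv_eq_one,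
      Real.rpow_one]
  have abs_rpow {s : ℝ} (hs : s ≠ 0) (h : α → ℝ) (a : α) :
      |w a ^ s⁻¹ * h a| ^ s = w a * |h a| ^ s := by
    have hws : 0 ≤ w a ^ s⁻¹ := Real.rpow_nonneg (hw a) _
    rw [abs_mul, abs_of_nonneg hws, Real.mul_rpow hws (abs_nonneg _), Real.rpow_inv_rpow (hw a) hs]
  calc ∑ a, w a * (f a * g a) = ∑ a, w a ^ p⁻¹ * f a * (w a ^ q⁻¹ * g a) :=
        sum_congr rfl fun a _ ↦ by rw [mul_mul_mul_comm, weight_split]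
    _ ≤ wnorm w p f * wnorm w q g := by
        simpa only [wnorm, abs_rpow hpq.ne_zero, abs_rpow hpq.symm.ne_zero] using
          Real.inner_le_Lp_mul_Lq univ (fun a ↦ w a ^ p⁻¹ * f a) (fun a ↦ w a ^ q⁻¹ * g a) hpq

end WeightedNorm

lemma margX_mul_condOp {X Y : Type*} [Fintype Y] {D : X × Y → ℝ} (hD : ∀ z, 0 ≤ D z)
    (g : Y → ℝ) (x : X) : margX D x * condOp D g x = ∑ y, D (x, y) * g y := by
  refine mul_div_cancel_of_imp' fun hx ↦ sum_eq_zero fun y hy ↦ ?_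
  rw [(sum_eq_zero_iff_of_nonneg fun y _ ↦ hD (x, y)).1 hx y hy, zero_mul]

/-- The two-function form of hypercontractivity: the bilinear form with kernel `D` has norm at most
`1` on `L_p(u) × L_r(v)`. The weights `u` and `v` need not be the marginals of `D`. -/
def TwoFunctionBound {X Y : Type*} [Fintype X] [Fintype Y] (D : X × Y → ℝ) (u : X → ℝ) (v : Y → ℝ)
    (p r : ℝ) : Prop :=
  ∀ (f : X → ℝ) (g : Y → ℝ), ∑ x, ∑ y, D (x, y) * (f x * g y) ≤ wnorm u p f * wnorm v r g

namespace TwoFunctionBound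

section Basic

variable {X Y X' Y' : Type*} [Fintype X] [Fintype Y] [Fintype X'] [Fintype Y']
  {D : X × Y → ℝ} {u : X → ℝ} {v : Y → ℝ} {p q r : ℝ}

theorem of_wnorm_condOp_le (hD : ∀ z, 0 ≤ D z) (hpq : p.HolderConjugate q)
    (h : ∀ g, wnorm (margX D) q (condOp D g) ≤ wnorm v r g) :
    TwoFunctionBound D (margX D) v p r := by
  intro f g
  have hmarg : ∀ x, 0 ≤ margX D x := fun x ↦ sum_nonneg fun y _ ↦ hD (x, y)
  calc ∑ x, ∑ y, D (x, y) * (f x * g y) = ∑ x, margX D x * (f x * condOp D g x) :=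
        sum_congr rfl fun x _ ↦ by
          rw [mul_left_comm, margX_mul_condOp hD, mul_sum]
          exact sum_congr rfl fun y _ ↦ mul_left_comm _ _ _
    _ ≤ wnorm (margX D) p f * wnorm (margX D) q (condOp D g) :=
        sum_mul_mul_le_wnorm_mul_wnorm hmarg hpq f _
    _ ≤ wnorm (margX D) p f * wnorm v r g :=
        mul_le_mul_of_nonneg_left (h g) (wnorm_nonneg hmarg p f)

theorem comp_equiv (h : TwoFunctionBound D u v p r) (e : X' ≃ X) (e' : Y' ≃ Y) :
    TwoFunctionBound (D ∘ Prod.map e e') (u ∘ e) (v ∘ e') p r := by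
  intro f g
  have hfg := h (f ∘ e.symm) (g ∘ e'.symm)
  rw [← wnorm_comp_equiv u p _ e, ← wnorm_comp_equiv v r _ e', ← e.sum_comp] at hfg
  simp_rw [← e'.sum_comp] at hfg
  simpa [Function.comp_def] using hfg

theorem prod {E : X' × Y' → ℝ} {u' : X' → ℝ} {v' : Y' → ℝ} (hD : ∀ z, 0 ≤ D z)
    (hu' : ∀ x, 0 ≤ u' x) (hv' : ∀ y, 0 ≤ v' y) (hp : p ≠ 0) (hr : r ≠ 0)
    (h : TwoFunctionBound D u v p r) (h' : TwoFunctionBound E u' v' p r) :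
    TwoFunctionBound (fun z : (X × X') × (Y × Y') ↦ D (z.1.1, z.2.1) * E (z.1.2, z.2.2))
      (fun x ↦ u x.1 * u' x.2) (fun y ↦ v y.1 * v' y.2) p r := by
  intro f g
  calc ∑ x : X × X', ∑ y : Y × Y', D (x.1, y.1) * E (x.2, y.2) * (f x * g y)
      = ∑ x, ∑ y, D (x, y) * ∑ x', ∑ y', E (x', y') * (f (x, x') * g (y, y')) := by
        simp_rw [Fintype.sum_prod_type, mul_sum, mul_assoc]
        exact sum_congr rfl fun x _ ↦ sum_comm
    _ ≤ ∑ x, ∑ y, D (x, y) *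
          ((wnorm u' p fun x' ↦ f (x, x')) * wnorm v' r fun y' ↦ g (y, y')) := by
        gcongr with x _ y _
        · exact hD (x, y)
        · exact h' _ _
    _ ≤ wnorm u p (fun x ↦ wnorm u' p fun x' ↦ f (x, x')) *
          wnorm v r (fun y ↦ wnorm v' r fun y' ↦ g (y, y')) := h _ _
    _ = _ := by rw [wnorm_prod hu' hp, wnorm_prod hv' hr]

theorem sum_sum_le (h : TwoFunctionBound D u v p r) (hp : p ≠ 0) (hr : r ≠ 0)
    (A : Finset X) (B : Finset Y) :
    ∑ x ∈ A, ∑ y ∈ B, D (x, y) ≤ (∑ x ∈ A, u x) ^ (1 / p) * (∑ y ∈ B, v y) ^ (1 / r) := by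
  classical
  rw [← wnorm_indicator_one hp, ← wnorm_indicator_one hr]
  refine le_of_eq_of_le ?_ (h _ _)
  simp [Set.indicator_apply]

end Basic

section Pi

variable {p r : ℝ}

lemma one_of_unique {X Y : Type*} [Fintype X] [Fintype Y] [Unique X] [Unique Y] (hp : p ≠ 0)
    (hr : r ≠ 0) : TwoFunctionBound (fun _ : X × Y ↦ 1) (fun _ ↦ 1) (fun _ ↦ 1) p r := by
  intro f g
  simpa only [Fintype.sum_unique, one_mul, wnorm_one_of_unique hp, wnorm_one_of_unique hr,
    ← abs_mul] using le_abs_self _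

theorem pi_of_equiv {ι κ : Type*} [Fintype ι] [Fintype κ] [DecidableEq ι] [DecidableEq κ]
    {X Y : κ → Type*} [∀ i, Fintype (X i)] [∀ i, Fintype (Y i)] {D : ∀ i, X i × Y i → ℝ}
    {u : ∀ i, X i → ℝ} {v : ∀ i, Y i → ℝ} (e : ι ≃ κ)
    (h : TwoFunctionBound
      (fun z : (∀ i, X (e i)) × (∀ i, Y (e i)) ↦ ∏ i, D (e i) (z.1 i, z.2 i))
      (fun x ↦ ∏ i, u (e i) (x i)) (fun y ↦ ∏ i, v (e i) (y i)) p r) :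
    TwoFunctionBound (fun z : (∀ i, X i) × (∀ i, Y i) ↦ ∏ i, D i (z.1 i, z.2 i))
      (fun x ↦ ∏ i, u i (x i)) (fun y ↦ ∏ i, v i (y i)) p r := by
  convert h.comp_equiv (Equiv.piCongrLeft X e).symm (Equiv.piCongrLeft Y e).symm using 1 <;>
    ext <;> simp [← e.prod_comp]

theorem pi_fin {n : ℕ} {X Y : Fin n → Type*} [∀ i, Fintype (X i)]
    [∀ i, Fintype (Y i)] {D : ∀ i, X i × Y i → ℝ} {u : ∀ i, X i → ℝ} {v : ∀ i, Y i → ℝ}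
    (hD : ∀ i z, 0 ≤ D i z) (hu : ∀ i x, 0 ≤ u i x) (hv : ∀ i y, 0 ≤ v i y)
    (hp : p ≠ 0) (hr : r ≠ 0) (h : ∀ i, TwoFunctionBound (D i) (u i) (v i) p r) :
    TwoFunctionBound (fun z : (∀ i, X i) × (∀ i, Y i) ↦ ∏ i, D i (z.1 i, z.2 i))
      (fun x ↦ ∏ i, u i (x i)) (fun y ↦ ∏ i, v i (y i)) p r := by
  induction n with
  | zero => simpa only [Fin.prod_univ_zero] using one_of_unique hp hr
  | succ n ih =>
    have hprod := prod (hD 0) (fun x ↦ prod_nonneg fun i _ ↦ hu (Fin.succ i) (x i))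
      (fun y ↦ prod_nonneg fun i _ ↦ hv (Fin.succ i) (y i)) hp hr (h 0)
      (ih (fun i ↦ hD i.succ) (fun i ↦ hu i.succ) (fun i ↦ hv i.succ) fun i ↦ h i.succ)
    convert hprod.comp_equiv (Fin.consEquiv X).symm (Fin.consEquiv Y).symm using 1 <;>
      ext <;> simp [Fin.prod_univ_succ, Fin.consEquiv, Fin.tail]

theorem pi {ι : Type*} [Fintype ι] [DecidableEq ι] {X Y : ι → Type*} [∀ i, Fintype (X i)]
    [∀ i, Fintype (Y i)] {D : ∀ i, X i × Y i → ℝ} {u : ∀ i, X i → ℝ} {v : ∀ i, Y i → ℝ}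
    (hD : ∀ i z, 0 ≤ D i z) (hu : ∀ i x, 0 ≤ u i x) (hv : ∀ i y, 0 ≤ v i y)
    (hp : p ≠ 0) (hr : r ≠ 0) (h : ∀ i, TwoFunctionBound (D i) (u i) (v i) p r) :
    TwoFunctionBound (fun z : (∀ i, X i) × (∀ i, Y i) ↦ ∏ i, D i (z.1 i, z.2 i))
      (fun x ↦ ∏ i, u i (x i)) (fun y ↦ ∏ i, v i (y i)) p r :=
  let e := (Fintype.equivFin ι).symm
  pi_of_equiv e <|
    pi_fin (fun i ↦ hD (e i)) (fun i ↦ hu (e i)) (fun i ↦ hv (e i)) hp hr fun i ↦ h (e i)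

end Pi

end TwoFunctionBound

lemma holderConjugate_two_sub {δ : ℝ} (hδ : δ < 1) :
    (2 - δ).HolderConjugate (2 + δ / (1 - δ)) := by
  have hδ' : 1 - δ ≠ 0 := by linarith
  rw [Real.holderConjugate_iff_eq_conjExponent (by linarith), show 2 - δ - 1 = 1 - δ by ring]
  field_simp
  ring

theorem Hypercontractive.twoFunctionBound {X Y : Type*} [Fintype X] [Fintype Y] {D : X × Y → ℝ}
    {δ : ℝ} (h : Hypercontractive D δ) (hD : ∀ z, 0 ≤ D z) (hδ : δ < 1) :
    TwoFunctionBound D (margX D) (margY D) (2 - δ) (2 - δ) :=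
  .of_wnorm_condOp_le hD (holderConjugate_two_sub hδ) h

lemma sum_prod_eq_card_div_pow {ι α : Type*} [Fintype ι] {w : α → ℝ} {N : ℝ}
    (hw : ∀ a, w a = 1 / N) (A : Finset (ι → α)) :
    ∑ x ∈ A, ∏ i, w (x i) = #A / N ^ Fintype.card ι := by
  simp [hw, div_eq_mul_inv]

lemma rpow_le_add_mul_rpow {c m s : ℝ} (hc : 1 ≤ c) (hm : 0 ≤ m) (hs : 0 ≤ s) :
    m ^ s ≤ m + (c * m) ^ s :=
  (Real.rpow_le_rpow hm (le_mul_of_one_le_left hm hc) hs).trans (le_add_of_nonneg_left hm)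

theorem stmt10_general {ι : Type*} [Fintype ι] {X Y : ι → Type*} [∀ i, Fintype (X i)]
    [∀ i, Fintype (Y i)] (D : ∀ i, X i × Y i → ℝ) (hD : ∀ i z, 0 ≤ D i z) (δ : ℝ) (hδ : δ < 1)
    (hhc : ∀ i, Hypercontractive (D i) δ) (A : Finset (∀ i, X i)) (B : Finset (∀ i, Y i)) :
    ∑ x ∈ A, ∑ y ∈ B, ∏ i, D i (x i, y i) ≤
      ((∑ x ∈ A, ∏ i, margX (D i) (x i)) * ∑ y ∈ B, ∏ i, margY (D i) (y i)) ^ (1 / (2 - δ)) := by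
  classical
  have hX : ∀ i x, 0 ≤ margX (D i) x := fun i x ↦ sum_nonneg fun y _ ↦ hD i (x, y)
  have hY : ∀ i y, 0 ≤ margY (D i) y := fun i y ↦ sum_nonneg fun x _ ↦ hD i (x, y)
  have hp : 2 - δ ≠ 0 := by linarith
  rw [Real.mul_rpow (sum_nonneg fun x _ ↦ prod_nonneg fun i _ ↦ hX i (x i))
    (sum_nonneg fun y _ ↦ prod_nonneg fun i _ ↦ hY i (y i))]
  exact (TwoFunctionBound.pi hD hX hY hp hp fun i ↦ (hhc i).twoFunctionBound (hD i) hδ).sum_sum_le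
    hp hp A B

theorem stmt10 {X Y : Type*} [Fintype X] [Fintype Y] [Nonempty X] [Nonempty Y]
    (D : X × Y → ℝ) (hD0 : ∀ p, 0 ≤ D p) (hD1 : ∑ p, D p = 1)
    (hDX : ∀ x, margX D x = 1 / Fintype.card X)
    (hDY : ∀ y, margY D y = 1 / Fintype.card Y)
    (δ : ℝ) (hδ0 : 0 ≤ δ) (hδ1 : δ < 1) (hhc : Hypercontractive D δ)
    (n : ℕ) (A : Finset (Fin n → X)) (B : Finset (Fin n → Y)) (μ ν : ℝ)
    (hμ : μ = (A.card : ℝ) / (Fintype.card X : ℝ) ^ n)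
    (hν : ν = (B.card : ℝ) / (Fintype.card Y : ℝ) ^ n) :
    ∑ x ∈ A, ∑ y ∈ B, ∏ i, D (x i, y i) ≤ μ * ν + (4 * μ * ν) ^ (1 / (2 - δ)) := by
  have hbound := stmt10_general (fun _ ↦ D) (fun _ ↦ hD0) δ hδ1 (fun _ ↦ hhc) A B
  simp only [sum_prod_eq_card_div_pow hDX, sum_prod_eq_card_div_pow hDY, Fintype.card_fin, ← hμ,
    ← hν] at hbound
  exact hbound.trans <| mul_assoc 4 μ ν ▸ rpow_le_add_mul_rpow (by norm_num)
    (by rw [hμ, hν]; positivity) (one_div_nonneg.2 (by linarith))
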